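/- Let K be a field of characteristic zero and d a simple Shamsuddin derivation of the polynomial ring K[X,Y₁,...,Yₙ], n ≥ 1. Then the isotropy group of d is trivial: the only K-algebra automorphism ρ of K[X,Y₁,...,Yₙ] with ρdρ⁻¹ = d is the identity. -/

import Mathlib

open MvPolynomial

/-!
For simple `d`, an element `f` with `d f = g * f` generates a stable ideal, so it is a constant, and
is `0` unless `g = 0`. As `z' = l z + b` is solvable in polynomials for every constant `l`, no
coefficient `a i` of a simple Shamsuddin derivation is constant.

Let `ρ` commute with `d`. Then `ρ X - X` is a constant `c`, and `ρ (Y i)` solves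
`d f = a i (X + c) f + b i (X + c)`. Since `∂/∂Y j` commutes with `d` up to `a j • ∂/∂Y j`, each
`∂/∂Y j (ρ (Y i))` is multiplied by `a i (X + c) - a j` under `d`. If that factor were nonzero for
every `j`, then `ρ (Y i)` would be a polynomial in `X`, contradicting simplicity after translating
back by `-c`. So translation by `c` maps the finite family `a` of nonconstant polynomials to itself,
which forces `c = 0`. Then `ρ (Y i) - Y i` is multiplied by `a i ≠ 0` under `d`, so it vanishes.
-/

open scoped Polynomial

section Univariate

theorem exists_derivative_eq {K : Type*} [Field K] [CharZero K] (b : K[X]) :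
    ∃ z : K[X], z.derivative = b := by
  induction b using Polynomial.induction_on' with
  | add p q hp hq =>
    obtain ⟨z, rfl⟩ := hp
    obtain ⟨w, rfl⟩ := hq
    exact ⟨z + w, Polynomial.derivative_add⟩
  | monomial m r =>
    have hm : (m : K) + 1 ≠ 0 := Nat.cast_add_one_ne_zero m
    exact ⟨Polynomial.monomial (m + 1) (r / (m + 1)), by simp [hm]⟩

theorem exists_derivative_eq_C_mul_add_of_ne_zero {K : Type*} [Field K] {l : K} (hl : l ≠ 0)
    (b : K[X]) : ∃ z : K[X], z.derivative = Polynomial.C l * z + b := by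
  suffices h : ∀ (n : ℕ) (b : K[X]), Polynomial.derivative^[n] b = 0 →
      ∃ z : K[X], z.derivative = Polynomial.C l * z + b from
    h _ b (Polynomial.iterate_derivative_eq_zero b.natDegree.lt_succ_self)
  intro n
  induction n with
  | zero => exact fun b hb => ⟨0, by simpa using hb.symm⟩
  | succ n ih =>
    intro b hb
    obtain ⟨w, hw⟩ := ih (Polynomial.C l⁻¹ * b.derivative) (by
      rw [Polynomial.iterate_derivative_C_mul, ← Function.iterate_succ_apply, hb, mul_zero])
    have hC : Polynomial.C l * Polynomial.C l⁻¹ = 1 := by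
      rw [← Polynomial.C_mul, mul_inv_cancel₀ hl, Polynomial.C_1]
    refine ⟨w - Polynomial.C l⁻¹ * b, ?_⟩
    rw [Polynomial.derivative_sub, Polynomial.derivative_C_mul, hw]
    linear_combination b * hC

theorem exists_derivative_eq_C_mul_add {K : Type*} [Field K] [CharZero K] (l : K) (b : K[X]) :
    ∃ z : K[X], z.derivative = Polynomial.C l * z + b := by
  obtain rfl | hl := eq_or_ne l 0
  · simpa using exists_derivative_eq b
  · exact exists_derivative_eq_C_mul_add_of_ne_zero hl b

theorem derivative_taylor {R : Type*} [CommSemiring R] (r : R) (p : R[X]) :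
    (Polynomial.taylor r p).derivative = Polynomial.taylor r p.derivative := by
  simp [Polynomial.taylor_apply, Polynomial.derivative_comp]

variable {R : Type*} [CommRing R] [IsDomain R] [CharZero R]

theorem natDegree_eq_zero_of_periodic {p : R[X]} {c : R} (hc : c ≠ 0)
    (h : Function.Periodic (fun x => p.eval x) c) : p.natDegree = 0 := by
  suffices hp : p = Polynomial.C (p.eval 0) by
    rw [hp, Polynomial.natDegree_C]
  have hinj : Function.Injective fun m : ℕ => (m : R) * c :=
    (mul_left_injective₀ hc).comp Nat.cast_injective
  refine Polynomial.eq_of_infinite_eval_eq _ _ ((Set.infinite_range_of_injective hinj).mono ?_)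
  rintro _ ⟨m, rfl⟩
  simpa using h.nat_mul_eq m

theorem injective_taylor_apply {p : R[X]} (hp : p.natDegree ≠ 0) :
    Function.Injective fun r => Polynomial.taylor r p := by
  intro r s h
  contrapose! hp with hrs
  refine natDegree_eq_zero_of_periodic (sub_ne_zero.2 hrs) fun x => ?_
  have hx := congrArg (Polynomial.eval (x - s)) h
  simp only [Polynomial.taylor_eval, sub_add_cancel] at hx
  rwa [sub_add_eq_add_sub, add_sub_assoc] at hx

theorem natDegree_eq_zero_of_mem_of_mapsTo_taylor {S : Set R[X]} (hS : S.Finite) {c : R}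
    (hc : c ≠ 0) (hmaps : Set.MapsTo (Polynomial.taylor c) S S) {p : R[X]} (hp : p ∈ S) :
    p.natDegree = 0 := by
  by_contra hdeg
  have hmem : ∀ m : ℕ, Polynomial.taylor (m * c) p ∈ S := by
    intro m
    induction m with
    | zero => simpa using hp
    | succ m ih => simpa [Polynomial.taylor_taylor, add_mul, add_comm] using hmaps ih
  have hinj : Function.Injective fun m : ℕ => Polynomial.taylor (m * c) p :=
    (injective_taylor_apply hdeg).comp ((mul_left_injective₀ hc).comp Nat.cast_injective)
  exact Set.infinite_of_injective_forall_mem hinj hmem hS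

end Univariate

section Multivariate

variable {R τ : Type*} [CommSemiring R] {o : τ}

theorem pderiv_aeval_X_of_ne {j : τ} (hj : j ≠ o) (p : R[X]) :
    pderiv j (Polynomial.aeval (X o : MvPolynomial τ R) p) = 0 := by
  rw [Derivation.map_aeval, pderiv_X_of_ne hj.symm, smul_zero]

theorem notMem_vars_of_pderiv_eq_zero [NoZeroDivisors R] [CharZero R] {j : τ}
    {f : MvPolynomial τ R} (h : pderiv j f = 0) : j ∉ f.vars := by
  rw [mem_vars_iff_mem_support]
  rintro ⟨m, hm, hj⟩
  have hsplit : m - Finsupp.single j 1 + Finsupp.single j 1 = m :=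
    tsub_add_cancel_of_le (Finsupp.single_le_iff.2 (Nat.one_le_iff_ne_zero.2
      (Finsupp.mem_support_iff.1 hj)))
  have hcoeff := coeff_pderiv f (m - Finsupp.single j 1) (i := j)
  rw [h, hsplit, coeff_zero] at hcoeff
  exact mul_ne_zero (mem_support_iff.1 hm) (Nat.cast_add_one_ne_zero _) hcoeff.symm

theorem exists_aeval_X_eq_of_pderiv_eq_zero [NoZeroDivisors R] [CharZero R]
    {f : MvPolynomial τ R} (h : ∀ j ≠ o, pderiv j f = 0) :
    ∃ z : R[X], Polynomial.aeval (X o) z = f := by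
  have hf : f ∈ supported R {o} :=
    mem_supported.2 fun j hj => not_not.1 fun hjo => notMem_vars_of_pderiv_eq_zero (h j hjo) hj
  rwa [supported_eq_adjoin_X, Set.image_singleton, Algebra.adjoin_singleton_eq_range_aeval] at hf

theorem aeval_X_injective {R : Type*} [CommRing R] (o : τ) :
    Function.Injective (Polynomial.aeval (X o : MvPolynomial τ R) : R[X] → MvPolynomial τ R) :=
  transcendental_iff_injective.1 (transcendental_X R o)

theorem algHom_aeval_X_eq_aeval_taylor {ρ : MvPolynomial τ R →ₐ[R] MvPolynomial τ R} {c : R}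
    (h : ρ (X o) = X o + C c) (p : R[X]) :
    ρ (Polynomial.aeval (X o) p) = Polynomial.aeval (X o) (Polynomial.taylor c p) := by
  rw [← Polynomial.aeval_algHom_apply, h, Polynomial.taylor_apply, Polynomial.aeval_comp]
  simp [algebraMap_eq]

end Multivariate

/-- A derivation of `A` is simple if `A` has no proper nonzero ideal stable under it. -/
def IsSimpleDerivation {R A : Type*} [CommSemiring R] [CommSemiring A] [Algebra R A]
    (d : Derivation R A A) : Prop :=
  ∀ I : Ideal A, (∀ x ∈ I, d x ∈ I) → I = ⊥ ∨ I = ⊤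

namespace IsSimpleDerivation

theorem eq_zero_or_isUnit_of_map_eq_mul {R A : Type*} [CommSemiring R] [CommSemiring A]
    [Algebra R A] {d : Derivation R A A} (hd : IsSimpleDerivation d) {f g : A} (h : d f = g * f) :
    f = 0 ∨ IsUnit f := by
  rw [← Ideal.span_singleton_eq_bot, ← Ideal.span_singleton_eq_top]
  refine hd _ fun x hx => ?_
  obtain ⟨q, rfl⟩ := Ideal.mem_span_singleton.1 hx
  rw [Ideal.mem_span_singleton, Derivation.leibniz, h, smul_eq_mul, smul_eq_mul]
  exact ⟨d q + q * g, by ring⟩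

variable {R τ : Type*} [CommRing R] {d : Derivation R (MvPolynomial τ R) (MvPolynomial τ R)}
  {f g : MvPolynomial τ R}

theorem exists_eq_C_of_map_eq_mul [IsReduced R] (hd : IsSimpleDerivation d) (h : d f = g * f) :
    ∃ k, f = C k := by
  obtain rfl | hf := hd.eq_zero_or_isUnit_of_map_eq_mul h
  · exact ⟨0, C_0.symm⟩
  · obtain ⟨k, -, hk⟩ := isUnit_iff_eq_C_of_isReduced.1 hf
    exact ⟨k, hk⟩

theorem eq_zero_of_map_eq_mul [NoZeroDivisors R] (hd : IsSimpleDerivation d) (h : d f = g * f)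
    (hg : g ≠ 0) : f = 0 := by
  obtain ⟨k, rfl⟩ := hd.exists_eq_C_of_map_eq_mul h
  have hk : d (C k) = 0 := d.map_algebraMap k
  exact (mul_eq_zero.1 (h.symm.trans hk)).resolve_left hg

end IsSimpleDerivation

/-- The Shamsuddin derivations of a polynomial ring. The variable `X o` plays the role of `X`, the
other variables that of the `Yᵢ`; the values `a o` and `b o` are irrelevant. -/
structure IsShamsuddin {R τ : Type*} [CommSemiring R]
    (d : Derivation R (MvPolynomial τ R) (MvPolynomial τ R)) (o : τ) (a b : τ → R[X]) : Prop where
  map_X_base : d (X o) = 1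
  map_X : ∀ i ≠ o, d (X i) = Polynomial.aeval (X o) (a i) * X i + Polynomial.aeval (X o) (b i)

namespace IsShamsuddin

section CommRing

variable {R τ : Type*} [CommRing R] {d : Derivation R (MvPolynomial τ R) (MvPolynomial τ R)}
  {o : τ} {a b : τ → R[X]}

theorem map_aeval (hd : IsShamsuddin d o a b) (p : R[X]) :
    d (Polynomial.aeval (X o) p) = Polynomial.aeval (X o) p.derivative := by
  rw [Derivation.map_aeval, hd.map_X_base, smul_eq_mul, mul_one]

theorem commutator_pderiv (hd : IsShamsuddin d o a b) {j : τ} (hj : j ≠ o) :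
    ⁅(pderiv j : Derivation R (MvPolynomial τ R) (MvPolynomial τ R)), d⁆ =
      Polynomial.aeval (X o : MvPolynomial τ R) (a j) • pderiv j := by
  refine derivation_ext fun i => ?_
  rw [Derivation.commutator_apply, Derivation.smul_apply]
  obtain rfl | hio := eq_or_ne i o
  · simp [hd.map_X_base, pderiv_X_of_ne hj.symm]
  rw [hd.map_X i hio, map_add, Derivation.leibniz, pderiv_aeval_X_of_ne hj, pderiv_aeval_X_of_ne hj]
  obtain rfl | hij := eq_or_ne i j
  · simp
  · simp [pderiv_X_of_ne hij]

theorem map_pderiv_eq_mul (hd : IsShamsuddin d o a b) {j : τ} (hj : j ≠ o) {f : MvPolynomial τ R}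
    {p q : R[X]} (hf : d f = Polynomial.aeval (X o) p * f + Polynomial.aeval (X o) q) :
    d (pderiv j f) = Polynomial.aeval (X o) (p - a j) * pderiv j f := by
  have hcomm := DFunLike.congr_fun (hd.commutator_pderiv hj) f
  rw [Derivation.commutator_apply, hf, map_add, Derivation.leibniz, pderiv_aeval_X_of_ne hj,
    pderiv_aeval_X_of_ne hj, Derivation.smul_apply] at hcomm
  simp only [smul_eq_mul] at hcomm
  rw [map_sub]
  linear_combination -hcomm

theorem map_algHom_X (hd : IsShamsuddin d o a b)
    {ρ : MvPolynomial τ R →ₐ[R] MvPolynomial τ R} (hρ : ∀ r, ρ (d r) = d (ρ r)) {c : R}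
    (hc : ρ (X o) = X o + C c) {i : τ} (hi : i ≠ o) :
    d (ρ (X i)) = Polynomial.aeval (X o) (Polynomial.taylor c (a i)) * ρ (X i) +
      Polynomial.aeval (X o) (Polynomial.taylor c (b i)) := by
  rw [← hρ, hd.map_X i hi, map_add, map_mul, algHom_aeval_X_eq_aeval_taylor hc,
    algHom_aeval_X_eq_aeval_taylor hc]

theorem exists_algHom_X_base_eq_add_C [IsReduced R] (hd : IsShamsuddin d o a b)
    (hsimple : IsSimpleDerivation d) {ρ : MvPolynomial τ R →ₐ[R] MvPolynomial τ R}
    (hρ : ∀ r, ρ (d r) = d (ρ r)) : ∃ c, ρ (X o) = X o + C c := by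
  have hdiff : d (ρ (X o) - X o) = 0 * (ρ (X o) - X o) := by
    rw [map_sub, ← hρ, hd.map_X_base, map_one, sub_self, zero_mul]
  obtain ⟨c, hc⟩ := hsimple.exists_eq_C_of_map_eq_mul hdiff
  exact ⟨c, sub_eq_iff_eq_add'.1 hc⟩

theorem derivative_ne_mul_add [IsReduced R] [Nontrivial R] (hd : IsShamsuddin d o a b)
    (hsimple : IsSimpleDerivation d) {i : τ} (hi : i ≠ o) (z : R[X]) :
    z.derivative ≠ a i * z + b i := by
  intro hz
  have hdarboux : d (X i - Polynomial.aeval (X o) z) =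
      Polynomial.aeval (X o) (a i) * (X i - Polynomial.aeval (X o) z) := by
    rw [map_sub, hd.map_X i hi, hd.map_aeval, hz, map_add, map_mul]
    ring
  obtain ⟨k, hk⟩ := hsimple.exists_eq_C_of_map_eq_mul hdarboux
  have hone := congrArg (pderiv i) hk
  rw [map_sub, pderiv_X_self, pderiv_aeval_X_of_ne hi, pderiv_C, sub_zero] at hone
  exact one_ne_zero hone

theorem pderiv_eq_zero [NoZeroDivisors R] (hd : IsShamsuddin d o a b)
    (hsimple : IsSimpleDerivation d) {j : τ} (hj : j ≠ o) {f : MvPolynomial τ R} {p q : R[X]}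
    (hf : d f = Polynomial.aeval (X o) p * f + Polynomial.aeval (X o) q) (hp : p ≠ a j) :
    pderiv j f = 0 :=
  hsimple.eq_zero_of_map_eq_mul (hd.map_pderiv_eq_mul hj hf)
    ((map_ne_zero_iff _ (aeval_X_injective o)).2 (sub_ne_zero.2 hp))

theorem exists_taylor_eq [NoZeroDivisors R] [CharZero R] (hd : IsShamsuddin d o a b)
    (hsimple : IsSimpleDerivation d) {ρ : MvPolynomial τ R →ₐ[R] MvPolynomial τ R}
    (hρ : ∀ r, ρ (d r) = d (ρ r)) {c : R} (hc : ρ (X o) = X o + C c) {i : τ} (hi : i ≠ o) :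
    ∃ j ≠ o, Polynomial.taylor c (a i) = a j := by
  by_contra! hne
  have hρX := hd.map_algHom_X hρ hc hi
  obtain ⟨z, hz⟩ := exists_aeval_X_eq_of_pderiv_eq_zero fun j hj =>
    hd.pderiv_eq_zero hsimple hj hρX (hne j hj)
  have hode : z.derivative = Polynomial.taylor c (a i) * z + Polynomial.taylor c (b i) := by
    apply aeval_X_injective o
    rw [← hd.map_aeval, hz, hρX, map_add, map_mul, hz]
  apply hd.derivative_ne_mul_add hsimple hi (Polynomial.taylor (-c) z)
  rw [derivative_taylor, hode, map_add, Polynomial.taylor_mul]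
  simp only [Polynomial.taylor_taylor, neg_add_cancel, Polynomial.taylor_zero]

end CommRing

variable {K τ : Type*} [Field K] [CharZero K]
  {d : Derivation K (MvPolynomial τ K) (MvPolynomial τ K)} {o : τ} {a b : τ → K[X]}

theorem natDegree_ne_zero (hd : IsShamsuddin d o a b) (hsimple : IsSimpleDerivation d) {i : τ}
    (hi : i ≠ o) : (a i).natDegree ≠ 0 := by
  intro hdeg
  obtain ⟨l, hl⟩ := Polynomial.natDegree_eq_zero.1 hdeg
  obtain ⟨z, hz⟩ := exists_derivative_eq_C_mul_add l (b i)
  exact hd.derivative_ne_mul_add hsimple hi z (hl ▸ hz)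

theorem algHom_X_base_eq_self [Finite τ] [Nontrivial τ] (hd : IsShamsuddin d o a b)
    (hsimple : IsSimpleDerivation d) {ρ : MvPolynomial τ K →ₐ[K] MvPolynomial τ K}
    (hρ : ∀ r, ρ (d r) = d (ρ r)) : ρ (X o) = X o := by
  obtain ⟨c, hc⟩ := hd.exists_algHom_X_base_eq_add_C hsimple hρ
  suffices hc0 : c = 0 by rw [hc, hc0, C_0, add_zero]
  by_contra hc0
  have hmaps : Set.MapsTo (Polynomial.taylor c) (a '' {o}ᶜ) (a '' {o}ᶜ) := by
    rintro _ ⟨i, hi, rfl⟩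
    obtain ⟨j, hj, hij⟩ := hd.exists_taylor_eq hsimple hρ hc hi
    exact ⟨j, hj, hij.symm⟩
  obtain ⟨i, hi⟩ := exists_ne o
  exact hd.natDegree_ne_zero hsimple hi
    (natDegree_eq_zero_of_mem_of_mapsTo_taylor (Set.toFinite _) hc0 hmaps ⟨i, hi, rfl⟩)

theorem algHom_X_eq_self (hd : IsShamsuddin d o a b) (hsimple : IsSimpleDerivation d)
    {ρ : MvPolynomial τ K →ₐ[K] MvPolynomial τ K} (hρ : ∀ r, ρ (d r) = d (ρ r))
    (ho : ρ (X o) = X o) {i : τ} (hi : i ≠ o) : ρ (X i) = X i := by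
  have hρX := hd.map_algHom_X hρ (c := 0) (by rw [ho, C_0, add_zero]) hi
  simp only [Polynomial.taylor_zero] at hρX
  have hdarboux : d (ρ (X i) - X i) = Polynomial.aeval (X o) (a i) * (ρ (X i) - X i) := by
    rw [map_sub, hρX, hd.map_X i hi]
    ring
  have ha : a i ≠ 0 := Polynomial.ne_zero_of_natDegree_gt
    (Nat.pos_of_ne_zero (hd.natDegree_ne_zero hsimple hi))
  exact sub_eq_zero.1
    (hsimple.eq_zero_of_map_eq_mul hdarboux ((map_ne_zero_iff _ (aeval_X_injective o)).2 ha))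

end IsShamsuddin

theorem stmt4_general {K τ : Type*} [Field K] [CharZero K] [Finite τ] [Nontrivial τ]
    {d : Derivation K (MvPolynomial τ K) (MvPolynomial τ K)} {o : τ} {a b : τ → K[X]}
    (hd : IsShamsuddin d o a b) (hsimple : IsSimpleDerivation d)
    (ρ : MvPolynomial τ K →ₐ[K] MvPolynomial τ K) (hρ : ∀ r, ρ (d r) = d (ρ r)) :
    ρ = AlgHom.id K (MvPolynomial τ K) := by
  have ho : ρ (X o) = X o := hd.algHom_X_base_eq_self hsimple hρ
  refine algHom_ext fun i => ?_
  obtain rfl | hi := eq_or_ne i o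
  · exact ho
  · exact hd.algHom_X_eq_self hsimple hρ ho hi

/-- The isotropy group of a simple Shamsuddin derivation of `K[X,Y₁,…,Yₙ]`, `n ≥ 1`,
is trivial. -/
theorem stmt4 (K : Type*) [Field K] [CharZero K] (n : ℕ) (hn : 1 ≤ n)
    (d : Derivation K (MvPolynomial (Fin (n + 1)) K) (MvPolynomial (Fin (n + 1)) K))
    (a b : Fin n → Polynomial K)
    (hdX : d (X 0) = 1)
    (hdY : ∀ i : Fin n, d (X i.succ) =
      Polynomial.aeval (X 0 : MvPolynomial (Fin (n + 1)) K) (a i) * X i.succ +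
        Polynomial.aeval (X 0 : MvPolynomial (Fin (n + 1)) K) (b i))
    (hsimple : ∀ I : Ideal (MvPolynomial (Fin (n + 1)) K),
      (∀ x ∈ I, d x ∈ I) → I = ⊥ ∨ I = ⊤)
    (ρ : MvPolynomial (Fin (n + 1)) K ≃ₐ[K] MvPolynomial (Fin (n + 1)) K)
    (hρ : ∀ r, ρ (d r) = d (ρ r)) :
    ρ = AlgEquiv.refl := by
  have : Nontrivial (Fin (n + 1)) := Fin.nontrivial_iff_two_le.2 (Nat.succ_le_succ hn)
  have hd : IsShamsuddin d 0 (Fin.cons 0 a) (Fin.cons 0 b) :=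
    ⟨hdX, Fin.cases (absurd rfl) fun i _ => by simpa using hdY i⟩
  exact AlgEquiv.coe_toAlgHom_injective (stmt4_general hd hsimple ρ hρ)
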